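/- arXiv:1603.06625 — 2 statements merged into one kernel-verified Lean document; each statement's English description precedes it below -/
import Mathlib

section
/- Let N = 2n be a positive even integer and let d_1, ..., d_n be units of Z/N (equivalently, odd residues mod 2n). Then there exists a partition of Z/N into n pairs such that the differences of the pairs are exactly d_1, ..., d_n (in some order, where the difference of a pair {a,b} is a - b or b - a). -/
/-!
Let `H` be a subgroup of index two of a finite abelian group `G`, and fix `g ∉ H`. If `∑ i, d i`
equals `|H| • g`, then the elements `d i - g` of `H` sum to zero, so M. Hall's theorem writes them
as `p i - a i` for two enumerations `a`, `p` of `H`, and the pairs `{a i, p i + g}` partition `G`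
with differences `d i`. Since the pairs are unordered, the sum condition only has to hold after
some sign changes. Changing the signs on `s` lowers the sum by `∑ i ∈ s, 2 • d i`. If `d i`
generates `G`, then `2 • d i` generates `H`, and each further generator of `H` adds at least one
new subset sum until the subset sums exhaust `H`.

Hall's theorem itself is proved by deforming the zero family to the given one, two entries at a
time, and repairing the enumerations after each deformation by an exchange process.
-/

open Finset

section Hall

variable {ι G : Type*} [AddCommGroup G]

/-- The family `c` is the difference of two enumerations of `G` by `ι`. -/
def IsEquivDifference (c : ι → G) : Prop :=
  ∃ a b : ι ≃ G, ∀ i, b i - a i = c i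

/-- A state of Hall's exchange process, which looks for enumerations `a` and `b` of `G` such that
`a k + b k + c k = S` for all `k`. The equation may fail at `i`, where `b` would have to take the
value `a j`, and at `j`, which stays fixed throughout. The set `V` consists of the earlier values
of `i`, to which `mapsTo` prevents the process from returning. -/
structure IsExchangeState (c : ι → G) (S : G) (j : ι) (a b : ι ≃ G) (i : ι) (V : Set ι) :
    Prop where
  notMem : i ∉ V
  notMem_insert : j ∉ insert i V
  add_add_eq : ∀ k, k ≠ i → k ≠ j → a k + b k + c k = S
  add_add_eq_left : a i + a j + c i = S
  add_add_eq_right : b i + b j + c j = S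
  mapsTo : Set.MapsTo b V (a '' insert i V)

namespace IsExchangeState

variable {c : ι → G} {S : G} {i j k : ι} {a b : ι ≃ G} {V : Set ι}

theorem ne (h : IsExchangeState c S j a b i V) : i ≠ j := by
  rintro rfl
  exact h.notMem_insert (Set.mem_insert i V)

theorem notMem_of_apply_eq (h : IsExchangeState c S j a b i V) (hk : b k = a j) : k ∉ V := by
  intro hkV
  obtain ⟨l, hl, hlk⟩ := h.mapsTo hkV
  obtain rfl : l = j := a.injective (hlk.trans hk)
  exact h.notMem_insert hl

theorem add_add_eq_of_left (h : IsExchangeState c S j a b i V) (hi : b i = a j) (k : ι) :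
    a k + b k + c k = S := by
  rcases eq_or_ne k i with rfl | hki
  · rw [hi, h.add_add_eq_left]
  rcases eq_or_ne k j with rfl | hkj
  · rw [← hi, h.add_add_eq_right]
  · exact h.add_add_eq k hki hkj

theorem add_add_eq_of_right [DecidableEq ι] (h : IsExchangeState c S j a b i V)
    (hj : b j = a j) (k : ι) : a k + (Equiv.swap i j).trans b k + c k = S := by
  rcases eq_or_ne k i with rfl | hki
  · simpa [hj] using h.add_add_eq_left
  rcases eq_or_ne k j with rfl | hkj
  · simpa [← hj, add_comm (b k)] using h.add_add_eq_right
  · simpa [Equiv.swap_apply_of_ne_of_ne hki hkj] using h.add_add_eq k hki hkj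

theorem exchange [DecidableEq ι] (h : IsExchangeState c S j a b i V) (hk : b k = a j)
    (hki : k ≠ i) (hkj : k ≠ j) :
    IsExchangeState c S j ((Equiv.swap j k).trans a) ((Equiv.swap i k).trans b) k
      (insert i V) where
  notMem := by simp [hki, h.notMem_of_apply_eq hk]
  notMem_insert := by simpa [hkj.symm] using h.notMem_insert
  add_add_eq l hlk hlj := by
    rcases eq_or_ne l i with rfl | hli
    · simpa [Equiv.swap_apply_of_ne_of_ne hlj hlk, hk] using h.add_add_eq_left
    · simpa [Equiv.swap_apply_of_ne_of_ne hlj hlk, Equiv.swap_apply_of_ne_of_ne hli hlk]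
        using h.add_add_eq l hli hlj
  add_add_eq_left := by simpa [hk, add_comm (a j)] using h.add_add_eq k hki hkj
  add_add_eq_right := by
    simpa [Equiv.swap_apply_of_ne_of_ne h.ne.symm hkj.symm] using h.add_add_eq_right
  mapsTo := by
    rintro l (rfl | hl)
    · exact ⟨k, Set.mem_insert k _, by simp [hk]⟩
    · have hli : l ≠ i := ne_of_mem_of_not_mem hl h.notMem
      have hlk : l ≠ k := ne_of_mem_of_not_mem hl (h.notMem_of_apply_eq hk)
      obtain ⟨m, hm, hml⟩ := h.mapsTo hl
      have hmj : m ≠ j := ne_of_mem_of_not_mem hm h.notMem_insert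
      have hmk : m ≠ k :=
        ne_of_mem_of_not_mem hm (by simp [hki, h.notMem_of_apply_eq hk])
      refine ⟨m, Set.mem_insert_of_mem k hm, ?_⟩
      simpa [Equiv.swap_apply_of_ne_of_ne hli hlk, Equiv.swap_apply_of_ne_of_ne hmj hmk] using hml

theorem exists_add_add_eq [Finite ι] (h : IsExchangeState c S j a b i V) :
    ∃ a' b' : ι ≃ G, ∀ k, a' k + b' k + c k = S := by
  classical
  induction V using WellFoundedGT.induction generalizing a b i with
  | ind V ih =>
    obtain ⟨k, hk⟩ := b.surjective (a j)
    rcases eq_or_ne k i with rfl | hki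
    · exact ⟨a, b, h.add_add_eq_of_left hk⟩
    rcases eq_or_ne k j with rfl | hkj
    · exact ⟨a, _, h.add_add_eq_of_right hk⟩
    · exact ih (insert i V) (Set.ssubset_insert h.notMem) (h.exchange hk hki hkj)

end IsExchangeState

namespace IsEquivDifference

variable {c c' : ι → G}

theorem of_add_add_eq {a b : ι ≃ G} {S : G} (h : ∀ i, a i + b i + c i = S) :
    IsEquivDifference c :=
  ⟨a, b.trans (Equiv.subLeft S), fun i ↦ by
    rw [Equiv.trans_apply, Equiv.subLeft_apply, ← h i]
    abel⟩

theorem zero (e : ι ≃ G) : IsEquivDifference (0 : ι → G) :=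
  ⟨e, e, fun i ↦ sub_self (e i)⟩

theorem of_add_eq [Finite ι] (hc : IsEquivDifference c) {i j : ι} (hij : i ≠ j)
    (hne : ∀ k, k ≠ i → k ≠ j → c' k = c k) (hadd : c' i + c' j = c i + c j) :
    IsEquivDifference c' := by
  obtain ⟨a, b, hab⟩ := hc
  have hb (k : ι) : b k = a k + c k := by rw [← hab k, add_sub_cancel]
  have hstate : IsExchangeState c' (a i + a j + c' i) j a
      (b.trans (Equiv.subLeft (a i + a j + c' i))) i ∅ :=
    { notMem := Set.notMem_empty i
      notMem_insert := by simp [hij.symm]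
      add_add_eq := fun k hki hkj ↦ by
        rw [Equiv.trans_apply, Equiv.subLeft_apply, hb, hne k hki hkj]
        abel
      add_add_eq_left := rfl
      add_add_eq_right := by
        simp only [Equiv.trans_apply, Equiv.subLeft_apply, hb]
        rw [eq_sub_of_add_eq hadd]
        abel
      mapsTo := Set.mapsTo_empty _ _ }
  obtain ⟨a', b', h⟩ := hstate.exists_add_add_eq
  exact of_add_add_eq h

theorem add_single_sub_single [Finite ι] [DecidableEq ι] (hc : IsEquivDifference c) (i j : ι)
    (x : G) : IsEquivDifference (c + (Pi.single i x - Pi.single j x)) := by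
  rcases eq_or_ne i j with rfl | hij
  · simpa using hc
  · refine hc.of_add_eq hij (fun k hki hkj ↦ by simp [hki, hkj]) ?_
    simp only [Pi.add_apply, Pi.sub_apply, Pi.single_eq_same, Pi.single_eq_of_ne hij,
      Pi.single_eq_of_ne hij.symm]
    abel

/-- **M. Hall's theorem**. -/
theorem of_sum_eq_zero [Fintype ι] (e : ι ≃ G) (hc : ∑ i, c i = 0) : IsEquivDifference c := by
  classical
  let i₀ := e.symm 0
  have hpartial (T : Finset ι) :
      IsEquivDifference (∑ i ∈ T, (Pi.single i (c i) - Pi.single i₀ (c i) : ι → G)) := by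
    induction T using Finset.induction_on with
    | empty => exact zero e
    | insert i T hi ih =>
      rw [sum_insert hi, add_comm]
      exact ih.add_single_sub_single i i₀ (c i)
  have hsum : ∑ i, (Pi.single i (c i) - Pi.single i₀ (c i) : ι → G) = c := by
    have hzero : ∑ i, (Pi.single i₀ (c i) : ι → G) = 0 := by
      simpa [hc] using (map_sum (AddMonoidHom.single (fun _ ↦ G) i₀) c univ).symm
    rw [sum_sub_distrib, univ_sum_single, hzero, sub_zero]
  exact hsum ▸ hpartial univ

end IsEquivDifference

end Hall

section SubsetSums

variable {ι G : Type*} [AddCommGroup G]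

theorem eq_univ_of_forall_add_mem [Finite G] {u : G} (hu : AddSubgroup.zmultiples u = ⊤)
    {A : Set G} (hA : A.Nonempty) (hadd : ∀ x ∈ A, x + u ∈ A) : A = Set.univ := by
  obtain ⟨x, hx⟩ := hA
  have hnsmul (k : ℕ) : x + k • u ∈ A := by
    induction k with
    | zero => simpa using hx
    | succ k ih => simpa [succ_nsmul, add_assoc] using hadd _ ih
  refine Set.eq_univ_of_forall fun y ↦ ?_
  obtain ⟨k, hk : k • u = y - x⟩ : y - x ∈ AddSubmonoid.multiples u := by
    rw [mem_multiples_iff_mem_zmultiples, hu]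
    exact AddSubgroup.mem_top _
  simpa [hk] using hnsmul k

theorem min_card_le_card_image_powerset_sum [Fintype G] [DecidableEq G] (d : ι → G)
    (T : Finset ι) (hd : ∀ i ∈ T, AddSubgroup.zmultiples (d i) = ⊤) :
    min (Fintype.card G) (#T + 1) ≤ #(T.powerset.image fun s ↦ ∑ i ∈ s, d i) := by
  classical
  induction T using Finset.induction_on with
  | empty => simp
  | insert j T hj ih =>
    specialize ih fun i hi ↦ hd i (mem_insert_of_mem hi)
    set A := T.powerset.image fun s ↦ ∑ i ∈ s, d i
    set B := (insert j T).powerset.image fun s ↦ ∑ i ∈ s, d i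
    have hAB : A ⊆ B := image_subset_image (powerset_mono.2 (subset_insert j T))
    have hadd : ∀ x ∈ A, x + d j ∈ B := by
      intro x hx
      obtain ⟨s, hs, rfl⟩ := mem_image.1 hx
      have hsT := mem_powerset.1 hs
      refine mem_image.2 ⟨insert j s, mem_powerset.2 (insert_subset_insert j hsT), ?_⟩
      rw [sum_insert (notMem_mono hsT hj), add_comm]
    rw [card_insert_of_notMem hj]
    rcases hAB.eq_or_ssubset with hEq | hlt
    · have hzero : (0 : G) ∈ A := mem_image.2 ⟨∅, by simp, sum_empty⟩
      have hA : A = univ := by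
        rw [← coe_eq_univ]
        exact eq_univ_of_forall_add_mem (hd j (mem_insert_self j T)) ⟨0, hzero⟩
          fun x hx ↦ hEq ▸ hadd x hx
      simp [← hEq, hA]
    · have := card_lt_card hlt
      omega

theorem exists_subset_sum_eq [Finite G] (d : ι → G) (T : Finset ι)
    (hd : ∀ i ∈ T, AddSubgroup.zmultiples (d i) = ⊤) (hT : Nat.card G ≤ #T + 1) (x : G) :
    ∃ s ⊆ T, ∑ i ∈ s, d i = x := by
  classical
  have := Fintype.ofFinite G
  have hcard := min_card_le_card_image_powerset_sum d T hd
  rw [← Nat.card_eq_fintype_card, min_eq_left hT, Nat.card_eq_fintype_card] at hcard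
  have hx := eq_univ_of_card _ ((card_le_univ _).antisymm hcard) ▸ mem_univ x
  simpa using hx

end SubsetSums

section IndexTwo

variable {ι G : Type*} [AddCommGroup G] {H : AddSubgroup G}

theorem ne_top_of_index_two (hH : H.index = 2) : H ≠ ⊤ := by
  rintro rfl
  simp at hH

theorem notMem_of_zmultiples_eq_top (hH : H ≠ ⊤) {x : G} (hx : AddSubgroup.zmultiples x = ⊤) :
    x ∉ H := fun hxH ↦
  hH (top_le_iff.1 (hx ▸ AddSubgroup.zmultiples_le_of_mem hxH))

theorem zmultiples_two_nsmul_eq_top_of_index_two (hH : H.index = 2) {x : G}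
    (hx : AddSubgroup.zmultiples x = ⊤) :
    AddSubgroup.zmultiples (⟨2 • x, AddSubgroup.two_smul_mem_of_index_two hH x⟩ : H) = ⊤ := by
  have hxH : x ∉ H := notMem_of_zmultiples_eq_top (ne_top_of_index_two hH) hx
  refine (AddSubgroup.eq_top_iff' _).2 fun ⟨y, hy⟩ ↦ ?_
  obtain ⟨k, rfl⟩ : ∃ k : ℤ, k • x = y :=
    AddSubgroup.mem_zmultiples_iff.1 (hx ▸ AddSubgroup.mem_top y)
  have htwo (m : ℤ) : (m + m) • x = m • 2 • x := by rw [add_zsmul, two_nsmul, zsmul_add]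
  obtain ⟨m, rfl⟩ | ⟨m, rfl⟩ := k.even_or_odd
  · exact AddSubgroup.mem_zmultiples_iff.2 ⟨m, Subtype.ext (htwo m).symm⟩
  · rw [two_mul, add_zsmul, one_zsmul, htwo] at hy
    have hm := H.zsmul_mem (AddSubgroup.two_smul_mem_of_index_two hH x) m
    exact absurd ((H.add_mem_cancel_left hm).1 hy) hxH

theorem sub_mem_of_index_two (hH : H.index = 2) {x y : G} (hx : x ∉ H) (hy : y ∉ H) :
    x - y ∈ H := by
  rw [sub_eq_add_neg, AddSubgroup.add_mem_iff_of_index_two hH, neg_mem_iff]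
  exact iff_of_false hx hy

theorem exists_bijective_sumElim_sub_eq [Finite G] [Fintype ι] (hH : H.index = 2)
    (hcard : Nat.card H = Fintype.card ι) {g : G} (hg : g ∉ H) {d : ι → G} (hd : ∀ i, d i ∉ H)
    (hsum : ∑ i, (d i - g) = 0) :
    ∃ a b : ι → G, Function.Bijective (Sum.elim a b) ∧ ∀ i, b i - a i = d i := by
  let c (i : ι) : H := ⟨d i - g, sub_mem_of_index_two hH (hd i) hg⟩
  have hc : ∑ i, c i = 0 := Subtype.ext (by simpa [c] using hsum)
  obtain ⟨e⟩ : Nonempty (ι ≃ H) := Finite.card_eq.1 (by rw [hcard, Nat.card_eq_fintype_card])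
  obtain ⟨a, p, hap⟩ := IsEquivDifference.of_sum_eq_zero e hc
  refine ⟨fun i ↦ a i, fun i ↦ p i + g, ?_, fun i ↦ ?_⟩
  · refine Function.Injective.bijective_of_nat_card_le (Function.Injective.sumElim ?_ ?_ ?_) ?_
    · exact Subtype.val_injective.comp a.injective
    · exact (add_left_injective g).comp (Subtype.val_injective.comp p.injective)
    · intro i k hik
      exact hg ((H.add_mem_cancel_left (p k).2).1 (hik ▸ (a i).2))
    · rw [← H.index_mul_card, hH, hcard, Nat.card_sum, Nat.card_eq_fintype_card, two_mul]
  · have hi : (p i : G) - a i = d i - g := congrArg Subtype.val (hap i)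
    rw [add_sub_right_comm, hi, sub_add_cancel]

theorem exists_eq_or_eq_neg_sum_sub_eq_zero [Finite G] [Fintype ι] (hH : H.index = 2)
    (hcard : Nat.card H = Fintype.card ι) {g : G} (hg : g ∉ H) {d : ι → G} (hd : ∀ i, d i ∉ H)
    (i₀ : ι) (hgen : ∀ i ≠ i₀, AddSubgroup.zmultiples (d i) = ⊤) :
    ∃ d' : ι → G, (∀ i, d' i = d i ∨ d' i = -d i) ∧ ∑ i, (d' i - g) = 0 := by
  classical
  obtain ⟨s, -, hs⟩ := exists_subset_sum_eq
    (fun i ↦ (⟨2 • d i, AddSubgroup.two_smul_mem_of_index_two hH (d i)⟩ : H)) (univ.erase i₀)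
    (fun i hi ↦ zmultiples_two_nsmul_eq_top_of_index_two hH (hgen i (ne_of_mem_erase hi)))
    (by rw [hcard, card_erase_add_one (mem_univ i₀), card_univ])
    (∑ i, ⟨d i - g, sub_mem_of_index_two hH (hd i) hg⟩)
  have hs' : ∑ i ∈ s, 2 • d i = ∑ i, (d i - g) := by simpa using congrArg Subtype.val hs
  refine ⟨fun i ↦ if i ∈ s then -d i else d i, fun i ↦ (ite_eq_or_eq _ _ _).symm, ?_⟩
  calc ∑ i, ((if i ∈ s then -d i else d i) - g)
      = ∑ i, ((d i - g) - if i ∈ s then 2 • d i else 0) :=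
        sum_congr rfl fun i _ ↦ by split_ifs <;> abel
    _ = 0 := by rw [sum_sub_distrib, sum_ite_mem, univ_inter, hs', sub_self]

theorem seating_couples_even_general [Finite G] [Fintype ι] (hH : H.index = 2)
    (hcard : Nat.card H = Fintype.card ι) (d : ι → G) (i₀ : ι) (hd₀ : d i₀ ∉ H)
    (hd : ∀ i ≠ i₀, AddSubgroup.zmultiples (d i) = ⊤) :
    ∃ a b : ι → G, Function.Bijective (Sum.elim a b) ∧
      ∀ i, a i - b i = d i ∨ b i - a i = d i := by
  have hdH (i : ι) : d i ∉ H := by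
    rcases eq_or_ne i i₀ with rfl | hi
    · exact hd₀
    · exact notMem_of_zmultiples_eq_top (ne_top_of_index_two hH) (hd i hi)
  obtain ⟨d', hd', hsum⟩ := exists_eq_or_eq_neg_sum_sub_eq_zero hH hcard hd₀ hdH i₀ hd
  have hdH' (i : ι) : d' i ∉ H := by
    rcases hd' i with hi | hi <;> simpa [hi] using hdH i
  obtain ⟨a, b, hab, hsub⟩ := exists_bijective_sumElim_sub_eq hH hcard hd₀ hdH' hsum
  refine ⟨a, b, hab, fun i ↦ (hd' i).symm.imp (fun hi ↦ ?_) fun hi ↦ (hsub i).trans hi⟩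
  rw [← neg_sub, hsub, hi, neg_neg]

end IndexTwo

theorem zmod_zmultiples_eq_top_of_isUnit {m : ℕ} {x : ZMod m} (hx : IsUnit x) :
    AddSubgroup.zmultiples x = ⊤ := by
  obtain ⟨y, hy⟩ := hx.exists_left_inv
  refine AddSubgroup.eq_top_iff' _ |>.2 fun z ↦ ?_
  obtain ⟨k, hk⟩ := ZMod.intCast_surjective (z * y)
  exact AddSubgroup.mem_zmultiples_iff.2 ⟨k, by rw [zsmul_eq_mul, hk, mul_assoc, hy, mul_one]⟩

theorem index_range_nsmul_two_zmod {n : ℕ} (hn : 0 < n) :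
    (nsmulAddMonoidHom (α := ZMod (2 * n)) 2).range.index = 2 := by
  have : NeZero (2 * n) := ⟨by omega⟩
  rw [IsAddCyclic.index_nsmulAddMonoidHom_range, Nat.card_zmod, Nat.gcd_eq_right ⟨n, rfl⟩]

theorem seating_couples_even (n : ℕ) (hn : 0 < n) (d : Fin n → ZMod (2 * n))
    (hd : ∀ i, IsUnit (d i)) :
    ∃ (a b : Fin n → ZMod (2 * n)) (σ : Equiv.Perm (Fin n)),
      Function.Bijective (Sum.elim a b) ∧
      ∀ i, a i - b i = d (σ i) ∨ b i - a i = d (σ i) := by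
  have : NeZero (2 * n) := ⟨by omega⟩
  let H := (nsmulAddMonoidHom (α := ZMod (2 * n)) 2).range
  have hH : H.index = 2 := index_range_nsmul_two_zmod hn
  have hcard : Nat.card H = Fintype.card (Fin n) := by
    have := H.index_mul_card
    rw [hH, Nat.card_zmod] at this
    rw [Fintype.card_fin]
    omega
  have hgen (i : Fin n) := zmod_zmultiples_eq_top_of_isUnit (hd i)
  obtain ⟨a, b, hab, hsub⟩ := seating_couples_even_general hH hcard d ⟨0, hn⟩
    (notMem_of_zmultiples_eq_top (ne_top_of_index_two hH) (hgen _)) fun i _ ↦ hgen i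
  exact ⟨a, b, Equiv.refl _, hab, hsub⟩
end

section
/- Let N = 2n and let d_1, ..., d_n be odd residues modulo 2n with d_1 + ... + d_n ≡ n (mod 2n). Then there exists a numbering a_1, ..., a_n of the odd residues of Z/2n and a permutation σ ∈ S_n such that 2i - a_i ≡ d_{σ(i)} (mod 2n) for all i = 1, ..., n. -/
/-!
Writing the odd residues modulo `2n` as `2y + 1` with `y` modulo `n` turns the claim into the case
`G = ℤ/n` of a theorem of Marshall Hall: a family `d` of elements of a finite abelian group `G`,
indexed by a copy of `G` and with sum `0`, is the difference `b - a` of two numberings of `G`.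

The family `0` is such a difference, and every family with sum `0` arises from it by altering two
terms at a time while preserving their sum. So suppose `d = b - a` is altered at `p` and `q` only,
into `d'`. Put `K = a p + a q + d' p` and let the permutation `g` be defined by
`a i + b (g i) = K`. Exchanging, if necessary, the values of `b` at `p` and `q` composes `g` with
the transposition of `p` and `q`, so `p` and `q` may be assumed to lie on different cycles of `g`.
If `c` is the cycle of `g` through `q`, then `d'` is the difference of `b ∘ c ∘ swap p q` and
`a ∘ c⁻¹`: on the cycle the relation `a i + b (g i) = K` gives `b (g i) - a (g⁻¹ i) = b i - a i`.
-/

open Equiv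

section SwapMul

variable {ι : Type*} {g : Perm ι} {p q : ι} {m : ℕ}

lemma exists_lt_pow_apply_eq_of_sameCycle (hm : 0 < m) (hp : (g ^ m) p = p)
    (h : g.SameCycle p q) : ∃ j < m, (g ^ j) p = q := by
  obtain ⟨z, rfl⟩ := h
  have hfix : ((g ^ m) ^ (z / m)) p = p := Function.IsFixedPt.perm_zpow hp _
  obtain ⟨j, hj⟩ := Int.eq_ofNat_of_zero_le (z.emod_nonneg (b := m) (by lia))
  have hjm : z % m < m := z.emod_lt_of_pos (by lia)
  refine ⟨j, by lia, ?_⟩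
  rw [← Int.emod_add_mul_ediv z m, hj, zpow_add, zpow_mul, zpow_natCast, zpow_natCast,
    Perm.mul_apply, hfix]

lemma swap_mul_pow_apply_of_forall_ne [DecidableEq ι] (hm : (g ^ m) p = q)
    (hmin : ∀ k < m, (g ^ k) p ≠ q) {j : ℕ} (hj : j < m) :
    ((swap p q * g) ^ j) p = (g ^ j) p := by
  induction j with
  | zero => rfl
  | succ j ih =>
    have hreturn : (g ^ (j + 1)) p ≠ p := fun hp =>
      hmin (m - (j + 1)) (by lia) <| by
        rw [← hm, ← Nat.sub_add_cancel hj.le, pow_add, Perm.mul_apply, hp, Nat.add_sub_cancel]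
    rw [pow_succ', Perm.mul_apply, ih (by lia), Perm.mul_apply, ← Perm.mul_apply g, ← pow_succ']
    exact swap_apply_of_ne_of_ne hreturn (hmin _ hj)

lemma not_sameCycle_swap_mul_of_pow_apply_eq [DecidableEq ι] (hpq : p ≠ q) (hm : (g ^ m) p = q) :
    ¬ (swap p q * g).SameCycle p q := by
  induction m using Nat.strong_induction_on with
  | _ m ih =>
  by_cases hlt : ∃ k < m, (g ^ k) p = q
  · obtain ⟨k, hkm, hk⟩ := hlt
    exact ih k hkm hk
  have hmin : ∀ k < m, (g ^ k) p ≠ q := fun k hkm hk => hlt ⟨k, hkm, hk⟩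
  obtain _ | m := m
  · exact absurd hm hpq
  have hperiod : ((swap p q * g) ^ (m + 1)) p = p := by
    rw [pow_succ', Perm.mul_apply, swap_mul_pow_apply_of_forall_ne hm hmin m.lt_succ_self,
      Perm.mul_apply, ← Perm.mul_apply g, ← pow_succ', hm, swap_apply_right]
  intro hsame
  obtain ⟨j, hj, hjq⟩ := exists_lt_pow_apply_eq_of_sameCycle m.succ_pos hperiod hsame
  exact hmin j hj (swap_mul_pow_apply_of_forall_ne hm hmin hj ▸ hjq)

lemma not_sameCycle_swap_mul [DecidableEq ι] (hpq : p ≠ q) (h : g.SameCycle p q) :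
    ¬ (swap p q * g).SameCycle p q := by
  obtain ⟨z, hz⟩ := h
  obtain ⟨m, rfl | rfl⟩ := z.eq_nat_or_neg
  · exact not_sameCycle_swap_mul_of_pow_apply_eq hpq (by simpa using hz)
  · rw [swap_comm, Perm.sameCycle_comm]
    exact not_sameCycle_swap_mul_of_pow_apply_eq (m := m) hpq.symm (by simp [← hz])

end SwapMul

/-- `d` is the difference of two numberings of the group `G` by the index type `ι`. Allowing an
index type other than `G` puts the two numberings on the same footing. -/
def IsDifference {ι G : Type*} [AddCommGroup G] (d : ι → G) : Prop :=
  ∃ a b : ι ≃ G, ∀ i, b i - a i = d i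

section Hall

variable {ι G : Type*} [AddCommGroup G] {d d' : ι → G} {p q : ι}

lemma isDifference_zero (e : ι ≃ G) : IsDifference (0 : ι → G) :=
  ⟨e, e, fun _ => sub_self _⟩

lemma isDifference_of_not_sameCycle {a b : ι ≃ G} {g : Perm ι}
    (hd : ∀ i, i ≠ p → i ≠ q → d i = b i - a i)
    (hsum : d p + d q = (b p - a p) + (b q - a q))
    (hg : ∀ i, a i + b (g i) = a p + a q + d p) (hpq : ¬ g.SameCycle q p) :
    IsDifference d := by
  classical
  have hg' (i : ι) : a (g.symm i) + b i = a p + a q + d p := by simpa using hg (g.symm i)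
  have hc {i : ι} (hi : g.SameCycle q i) : (g.cycleOf q).symm i = g.symm i := by
    rw [symm_apply_eq, (Perm.sameCycle_symm_apply_right.2 hi).cycleOf_apply, apply_symm_apply]
  have hc' {i : ι} (hi : ¬ g.SameCycle q i) : (g.cycleOf q).symm i = i := by
    rw [symm_apply_eq, Perm.cycleOf_apply_of_not_sameCycle hi]
  refine ⟨(g.cycleOf q).symm.trans a, ((swap p q).trans (g.cycleOf q)).trans b, fun i => ?_⟩
  simp only [trans_apply]
  rcases eq_or_ne i p with rfl | hip
  · rw [swap_apply_left, Perm.cycleOf_apply_self, hc' hpq, eq_sub_of_add_eq' (hg q)]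
    abel
  rcases eq_or_ne i q with rfl | hiq
  · rw [swap_apply_right, Perm.cycleOf_apply_of_not_sameCycle hpq, hc .rfl,
      eq_sub_of_add_eq (hg' i), eq_sub_of_add_eq' hsum]
    abel
  rw [swap_apply_of_ne_of_ne hip hiq, hd i hip hiq]
  by_cases hi : g.SameCycle q i
  · rw [hi.cycleOf_apply, hc hi, eq_sub_of_add_eq' (hg i), eq_sub_of_add_eq (hg' i)]
    abel
  · rw [Perm.cycleOf_apply_of_not_sameCycle hi, hc' hi]

lemma IsDifference.of_eqOn_compl_pair (hd : IsDifference d) (hpq : p ≠ q)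
    (heq : Set.EqOn d' d {p, q}ᶜ) (hsum : d' p + d' q = d p + d q) : IsDifference d' := by
  classical
  obtain ⟨a, b, hab⟩ := hd
  have hd' (i : ι) (hip : i ≠ p) (hiq : i ≠ q) : d' i = b i - a i := by
    rw [hab, heq (by simp [hip, hiq])]
  let g : Perm ι := (a.trans (Equiv.subLeft (a p + a q + d' p))).trans b.symm
  have hg (i : ι) : a i + b (g i) = a p + a q + d' p := by simp [g]
  by_cases h : g.SameCycle q p
  · refine isDifference_of_not_sameCycle (a := a) (b := (swap q p).trans b) (g := swap q p * g)
      ?_ ?_ ?_ (not_sameCycle_swap_mul hpq.symm h)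
    · intro i hip hiq
      rw [trans_apply, swap_apply_of_ne_of_ne hiq hip, hd' i hip hiq]
    · rw [hsum, ← hab, ← hab]
      simp only [trans_apply, swap_apply_left, swap_apply_right]
      abel
    · simpa using hg
  · exact isDifference_of_not_sameCycle hd' (by rw [hsum, hab, hab]) hg h

lemma IsDifference.add_single_sub_single [DecidableEq ι] (hd : IsDifference d) (p q : ι) (x : G) :
    IsDifference (d + (Pi.single p x - Pi.single q x)) := by
  rcases eq_or_ne p q with rfl | hpq
  · simpa using hd
  refine hd.of_eqOn_compl_pair hpq (fun i hi => ?_) ?_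
  · have hne : i ≠ p ∧ i ≠ q := by simpa using hi
    simp [hne.1, hne.2]
  · simp [hpq, hpq.symm]
    abel

theorem isDifference_of_sum_eq_zero (e : ι ≃ G) {s : Finset ι} (hs : ∀ i ∉ s, d i = 0)
    (hsum : ∑ i ∈ s, d i = 0) : IsDifference d := by
  classical
  let p := e.symm 0
  have htransfer (t : Finset ι) :
      IsDifference (∑ i ∈ t, (Pi.single i (d i) - Pi.single p (d i)) : ι → G) := by
    induction t using Finset.induction_on with
    | empty => exact isDifference_zero e
    | insert i t hi ih =>
      rw [Finset.sum_insert hi, add_comm]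
      exact ih.add_single_sub_single i p (d i)
  have hpivot : ∑ i ∈ s, Pi.single p (d i) = (0 : ι → G) := by
    rw [← Pi.single_zero p, ← hsum]
    exact (map_sum (AddMonoidHom.single (fun _ : ι => G) p) d s).symm
  have hdecomp : ∑ i ∈ s, (Pi.single i (d i) - Pi.single p (d i)) = d := by
    rw [Finset.sum_sub_distrib, hpivot, sub_zero]
    ext j
    simpa using fun hj => (hs j hj).symm
  exact hdecomp ▸ htransfer s

end Hall

section Parity

variable {n : ℕ}

/-- Doubling, as an embedding of `ℤ/n` onto the even residues modulo `2n`. -/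
def doubleHom (n : ℕ) : ZMod n →+ ZMod (2 * n) :=
  ZMod.lift n ⟨(AddMonoidHom.mulLeft 2).comp (Int.castAddHom (ZMod (2 * n))), by
    change (2 : ZMod (2 * n)) * ((n : ℤ) : ZMod (2 * n)) = 0
    exact_mod_cast ZMod.natCast_self (2 * n)⟩

lemma doubleHom_intCast (m : ℤ) : doubleHom n m = 2 * m := by
  simp [doubleHom]

lemma doubleHom_natCast (m : ℕ) : doubleHom n m = 2 * m := by
  exact_mod_cast doubleHom_intCast (n := n) m

lemma doubleHom_one : doubleHom n 1 = 2 := by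
  simpa using doubleHom_natCast (n := n) 1

lemma doubleHom_injective (n : ℕ) : Function.Injective (doubleHom n) := by
  refine (ZMod.lift_injective _).2 fun m hm => ?_
  have hdvd : (2 * n : ℤ) ∣ 2 * m := by
    rw [← Nat.cast_ofNat, ← Nat.cast_mul, ← ZMod.intCast_zmod_eq_zero_iff_dvd]
    simpa using hm
  exact (ZMod.intCast_zmod_eq_zero_iff_dvd m n).2 (Int.dvd_of_mul_dvd_mul_left two_ne_zero hdvd)

lemma odd_val_intCast_iff (m : ℤ) : Odd (m : ZMod (2 * n)).val ↔ Odd m := by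
  rcases eq_or_ne n 0 with rfl | hn
  · exact Int.natAbs_odd
  have : NeZero n := ⟨hn⟩
  rw [← Int.odd_coe_nat, ZMod.val_intCast, Int.odd_iff, Int.odd_iff,
    Int.emod_emod_of_dvd m (by simp)]

lemma odd_val_iff_exists_doubleHom_add_one {x : ZMod (2 * n)} :
    Odd x.val ↔ ∃ y, doubleHom n y + 1 = x := by
  constructor
  · obtain ⟨m, rfl⟩ := ZMod.intCast_surjective x
    rw [odd_val_intCast_iff]
    rintro ⟨k, rfl⟩
    exact ⟨k, by simp [doubleHom_intCast]⟩
  · rintro ⟨y, rfl⟩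
    obtain ⟨k, rfl⟩ := ZMod.intCast_surjective y
    rw [doubleHom_intCast]
    exact_mod_cast (odd_val_intCast_iff (n := n) (2 * k + 1)).2 (odd_two_mul_add_one k)

lemma exists_equiv_natCast_succ (n : ℕ) [NeZero n] :
    ∃ e : Fin n ≃ ZMod n, ∀ i, e i = ((i.val + 1 : ℕ) : ZMod n) := by
  refine ⟨(ZMod.finEquiv n).toEquiv.trans (Equiv.addRight 1), fun i => ?_⟩
  obtain ⟨m, rfl⟩ := Nat.exists_eq_succ_of_ne_zero (NeZero.ne n)
  rw [Nat.cast_succ]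
  exact congrArg (· + 1) (Fin.cast_val_eq_self i).symm

end Parity

theorem numbering_odd_residues (n : ℕ) (hn : 0 < n) (d : Fin n → ZMod (2 * n))
    (hd : ∀ i, Odd ((d i).val)) (hsum : ∑ i, d i = (n : ZMod (2 * n))) :
    ∃ (a : Fin n → ZMod (2 * n)) (σ : Equiv.Perm (Fin n)),
      Function.Injective a ∧ (∀ i, Odd ((a i).val)) ∧
      ∀ i, ((2 * (i.val + 1) : ℕ) : ZMod (2 * n)) - a i = d (σ i) := by
  have : NeZero n := ⟨hn.ne'⟩
  choose k hk using fun i => odd_val_iff_exists_doubleHom_add_one.1 (hd i)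
  have hk0 : ∑ i, k i = 0 := doubleHom_injective n <| by
    simpa [← hk, Finset.sum_add_distrib] using hsum
  obtain ⟨e, he⟩ := exists_equiv_natCast_succ n
  obtain ⟨a, b, hab⟩ := isDifference_of_sum_eq_zero e (by simp) hk0
  let σ : Equiv.Perm (Fin n) := e.trans b.symm
  refine ⟨fun i => doubleHom n (a (σ i) - 1) + 1, σ, ?_, ?_, fun i => ?_⟩
  · exact (add_left_injective 1).comp <| (doubleHom_injective n).comp <|
      sub_left_injective.comp <| a.injective.comp σ.injective
  · exact fun i => odd_val_iff_exists_doubleHom_add_one.2 ⟨_, rfl⟩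
  · have hb : doubleHom n (b (σ i)) = ((2 * (i.val + 1) : ℕ) : ZMod (2 * n)) := by
      rw [show b (σ i) = e i from b.apply_symm_apply (e i), he, doubleHom_natCast, Nat.cast_mul,
        Nat.cast_two]
    simp only [← hb, ← hk, ← hab, map_sub, doubleHom_one]
    ring
end
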